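/- Let A be a complete deterministic register automaton with k registers over an infinite data domain D, let v be a synchronizing data word for A containing at least k distinct data values, and let x_1, ..., x_k be the first k pairwise distinct data values occurring in v, listed in order of first occurrence. Then for every location ℓ of A and every 1 ≤ i ≤ k there exists a data word u with data(u) ⊆ {x_1, ..., x_i} such that every configuration (ℓ', ν) in post({ℓ} × D^k, u) has at least i registers r with ν(r) ∈ {x_1, ..., x_i}. -/

import Mathlib

open scoped Classical

/-- Register constraints over a set `R` of registers: built from the atom `true` and
atoms `= r` for `r ∈ R` using conjunction and negation. -/
inductive RC (R : Type) : Type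
  | tt : RC R
  | req : R → RC R
  | conj : RC R → RC R → RC R
  | neg : RC R → RC R

/-- Satisfaction of a register constraint by a register valuation `ν` and a datum `d`. -/
def RC.sat {R D : Type} (ν : R → D) (d : D) : RC R → Prop
  | RC.tt => True
  | RC.req r => ν r = d
  | RC.conj φ ψ => RC.sat ν d φ ∧ RC.sat ν d ψ
  | RC.neg φ => ¬ RC.sat ν d φ

/-- A configuration: a location together with a register valuation. -/
abbrev Config (L R D : Type) : Type := L × (R → D)

/-- A transition: source location, letter, guard, update set, target location. -/
abbrev RATrans (L A R : Type) : Type := L × A × RC R × Set R × L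

/-- The update `ν[up := d]` of a register valuation. -/
noncomputable def updVal {R D : Type} (ν : R → D) (up : Set R) (d : D) : R → D :=
  fun r => if r ∈ up then d else ν r

/-- One-step successor relation of the register automaton with transition relation `T`:
`Step T q (a, d) q'` holds iff `q' ∈ post(q, (a, d))`. -/
def Step {L A R D : Type} (T : Set (RATrans L A R)) (q : Config L R D) (i : A × D)
    (q' : Config L R D) : Prop :=
  ∃ (φ : RC R) (up : Set R) (ℓ' : L),
    (q.1, i.1, φ, up, ℓ') ∈ T ∧ RC.sat q.2 i.2 φ ∧ q' = (ℓ', updVal q.2 up i.2)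

/-- `post` of a set of configurations on a single input. -/
def postStep {L A R D : Type} (T : Set (RATrans L A R)) (S : Set (Config L R D)) (i : A × D) :
    Set (Config L R D) :=
  {q' | ∃ q ∈ S, Step T q i q'}

/-- `post` of a set of configurations on a data word. -/
def postWord {L A R D : Type} (T : Set (RATrans L A R)) (S : Set (Config L R D)) :
    List (A × D) → Set (Config L R D)
  | [] => S
  | i :: w => postWord T (postStep T S i) w

/-- Completeness: every configuration has at least one successor on every input. -/
def RAComplete (D : Type) {L A R : Type} (T : Set (RATrans L A R)) : Prop :=
  ∀ (q : Config L R D) (i : A × D), ∃ q', Step T q i q'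

/-- Determinism: every configuration has at most one successor on every input. -/
def RADet (D : Type) {L A R : Type} (T : Set (RATrans L A R)) : Prop :=
  ∀ (q : Config L R D) (i : A × D) (q₁ q₂ : Config L R D),
    Step T q i q₁ → Step T q i q₂ → q₁ = q₂

/-- The set of data values occurring in a data word. -/
def dataSet {A D : Type} (w : List (A × D)) : Set D := {d | ∃ p ∈ w, p.2 = d}

/-- A synchronizing data word: a nonempty data word sending the set of all
configurations to a single configuration. -/
def IsSync (D : Type) {L A R : Type} (T : Set (RATrans L A R)) (w : List (A × D)) : Prop :=
  w ≠ [] ∧ ∃ q : Config L R D, postWord T (Set.univ : Set (Config L R D)) w = {q}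

/-- `x` is the `i`-th datum of the list `ds` of data values (i.e. the `i`-th distinct
value in order of first occurrence): there is a position `j` holding `x`, such that `x`
does not occur before position `j` and exactly `i` distinct values occur up to `j`. -/
def IsIthDatum {D : Type} (ds : List D) (i : ℕ) (x : D) : Prop :=
  ∃ (j : ℕ) (h : j < ds.length), ds.get ⟨j, h⟩ = x ∧ x ∉ ds.take j ∧
    {d : D | d ∈ ds.take (j + 1)}.ncard = i

/-!
Let `X` be a finite set of at least `i` data, and collapse all data outside `X` to one fresh datum.
Words over `X` cannot tell a configuration from its collapse, and a location has only finitely many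
collapsed configurations. These can be treated one after the other, because reading a word over `X`
never decreases the number of registers holding values in `X`.

For a single configuration, replay the synchronizing word `v` along a bijection between the stored
data of `X ∪ dataSet v` in a run on `v` and the stored data of `X` in the replay. A datum of `v`
that is not stored must be matched by an unstored element of `X`, which exists as long as fewer than
`i` registers of the replay hold values in `X`. If this lasts until the end of `v`, then all
registers of the replay hold values in `X`, since the run on `v` ends with only data of `v` in its
registers: renaming another datum would lead to a second final configuration.
-/

section RegisterAutomata

variable {L A R D : Type}

section Data

@[simp]
theorem dataSet_nil : dataSet ([] : List (A × D)) = ∅ := by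
  simp [dataSet]

@[simp]
theorem dataSet_cons (e : A × D) (w : List (A × D)) :
    dataSet (e :: w) = insert e.2 (dataSet w) := by
  ext d
  simp [dataSet, eq_comm]

@[simp]
theorem dataSet_append (w w' : List (A × D)) :
    dataSet (w ++ w') = dataSet w ∪ dataSet w' := by
  ext d
  simp only [dataSet, List.mem_append, or_and_right, exists_or, Set.mem_ofPred_eq, Set.mem_union]

theorem finite_dataSet (w : List (A × D)) : (dataSet w).Finite := by
  induction w with
  | nil => simp
  | cons e w ih => simpa using ih

theorem le_of_getElem_eq_of_notMem_take {ds : List D} {m n : ℕ} {x : D} {hm : m < ds.length}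
    (hx : ds[m] = x) (hn : x ∉ ds.take n) : n ≤ m := by
  by_contra! hmn
  exact hn (List.mem_take_iff_getElem.2 ⟨m, by omega, hx⟩)

theorem IsIthDatum.index_unique {ds : List D} {i i' : ℕ} {x : D}
    (h : IsIthDatum ds i x) (h' : IsIthDatum ds i' x) : i = i' := by
  obtain ⟨j, hj, hjx, hfirst, hcount⟩ := h
  obtain ⟨j', hj', hjx', hfirst', hcount'⟩ := h'
  obtain rfl : j = j' := le_antisymm (le_of_getElem_eq_of_notMem_take hjx' hfirst)
    (le_of_getElem_eq_of_notMem_take hjx hfirst')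
  exact hcount.symm.trans hcount'

theorem injective_of_isIthDatum {ds : List D} {k : ℕ} {x : Fin k → D}
    (hx : ∀ i : Fin k, IsIthDatum ds ((i : ℕ) + 1) (x i)) : Function.Injective x := fun a b hab =>
  Fin.ext (Nat.succ_injective ((hx a).index_unique (hab ▸ hx b)))

theorem ncard_image_setOf_val_lt {k i : ℕ} (hik : i ≤ k) {x : Fin k → D}
    (hx : Function.Injective x) : (x '' {j | (j : ℕ) < i}).ncard = i := by
  rw [← Fin.range_castLE hik, ← Set.range_comp, Set.ncard_range_of_injective
    (hx.comp (Fin.castLE_injective hik)), Nat.card_fin]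

end Data

section Post

variable {T : Set (RATrans L A R)}

theorem postWord_union (S S' : Set (Config L R D)) (w : List (A × D)) :
    postWord T (S ∪ S') w = postWord T S w ∪ postWord T S' w := by
  induction w generalizing S S' with
  | nil => rfl
  | cons e w ih =>
    have hstep : postStep T (S ∪ S') e = postStep T S e ∪ postStep T S' e := by
      ext p
      simp only [postStep, Set.mem_union, or_and_right, exists_or, Set.mem_ofPred_eq]
    simp only [postWord, hstep, ih]

theorem postWord_mono {S S' : Set (Config L R D)} (h : S ⊆ S') (w : List (A × D)) :
    postWord T S w ⊆ postWord T S' w := by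
  rw [← Set.union_eq_self_of_subset_left h, postWord_union]
  exact Set.subset_union_left

theorem postWord_append (S : Set (Config L R D)) (w w' : List (A × D)) :
    postWord T S (w ++ w') = postWord T (postWord T S w) w' := by
  induction w generalizing S with
  | nil => rfl
  | cons e _ ih => exact ih _

theorem RADet.subsingleton_postWord (hdet : RADet D T) {S : Set (Config L R D)}
    (hS : S.Subsingleton) (w : List (A × D)) : (postWord T S w).Subsingleton := by
  induction w generalizing S with
  | nil => exact hS
  | cons e _ ih =>
    refine ih ?_
    rintro p ⟨q, hq, hp⟩ p' ⟨q', hq', hp'⟩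
    obtain rfl := hS hq hq'
    exact hdet q e p p' hp hp'

theorem RADet.postStep_singleton (hdet : RADet D T) {q p : Config L R D} {e : A × D}
    (h : Step T q e p) : postStep T {q} e = {p} := by
  ext p'
  simp only [postStep, Set.mem_singleton_iff, exists_eq_left, Set.mem_ofPred_eq]
  exact ⟨fun h' => hdet q e p' p h' h, fun h' => h' ▸ h⟩

theorem Step.preimage_subset {q p : Config L R D} {e : A × D} (h : Step T q e p) {X : Set D}
    (he : e.2 ∈ X) : q.2 ⁻¹' X ⊆ p.2 ⁻¹' X := by
  obtain ⟨φ, up, ℓ, -, -, rfl⟩ := h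
  intro r hr
  by_cases hup : r ∈ up <;> simp_all [updVal]

theorem le_ncard_preimage_of_mem_postWord [Finite R] {X : Set D} {w : List (A × D)}
    (hw : dataSet w ⊆ X) {S : Set (Config L R D)} {i : ℕ} (hS : ∀ q ∈ S, i ≤ (q.2 ⁻¹' X).ncard) :
    ∀ p ∈ postWord T S w, i ≤ (p.2 ⁻¹' X).ncard := by
  induction w generalizing S with
  | nil => exact hS
  | cons e w ih =>
    rw [dataSet_cons, Set.insert_subset_iff] at hw
    refine ih hw.2 ?_
    rintro p ⟨q, hq, hp⟩
    exact (hS q hq).trans (Set.ncard_le_ncard (hp.preimage_subset hw.1))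

end Post

theorem RC.sat_congr {ν ν' : R → D} {d d' : D} (h : ∀ r, ν r = d ↔ ν' r = d') (φ : RC R) :
    RC.sat ν d φ ↔ RC.sat ν' d' φ := by
  induction φ with
  | tt => rfl
  | req r => exact h r
  | conj φ ψ hφ hψ => exact and_congr hφ hψ
  | neg φ hφ => exact not_congr hφ

section Rename

variable {T : Set (RATrans L A R)} {X Y : Set D} {z d e : D}

/-- The configuration obtained by applying `σ` to the contents of all registers; `σ` need not be
injective, so that data can be identified. -/
def Config.rename (σ : D → D) (q : Config L R D) : Config L R D := (q.1, σ ∘ q.2)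

theorem Step.rename {σ : D → D} {q p : Config L R D} {e : A × D}
    (hσ : ∀ d, σ d = e.2 ↔ d = e.2) (h : Step T q e p) :
    Step T (Config.rename σ q) e (Config.rename σ p) := by
  obtain ⟨φ, up, ℓ, hT, hsat, rfl⟩ := h
  refine ⟨φ, up, ℓ, hT, (RC.sat_congr (fun r => (hσ (q.2 r)).symm) φ).1 hsat, ?_⟩
  refine Prod.ext rfl (funext fun r => ?_)
  by_cases hr : r ∈ up <;> simp [Config.rename, updVal, hr, hσ]

theorem rename_mem_postWord {σ : D → D} {w : List (A × D)}
    (hσ : ∀ d ∈ dataSet w, ∀ e, σ e = d ↔ e = d) {S : Set (Config L R D)} {p : Config L R D}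
    (hp : p ∈ postWord T S w) :
    Config.rename σ p ∈ postWord T (Config.rename σ '' S) w := by
  induction w generalizing S with
  | nil => exact Set.mem_image_of_mem _ hp
  | cons e w ih =>
    simp only [dataSet_cons, Set.forall_mem_insert] at hσ
    refine postWord_mono ?_ w (ih hσ.2 hp)
    rintro _ ⟨p', ⟨q, hq, hstep⟩, rfl⟩
    exact ⟨_, Set.mem_image_of_mem _ hq, hstep.rename hσ.1⟩

/-- The map on data that fixes `X` and identifies all data outside `X` with `z`; it is meant for
`z ∉ X`, where it preserves every equality test against a datum of `X`. -/
noncomputable def collapseOutside (X : Set D) (z : D) : D → D := X.piecewise id fun _ => z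

theorem collapseOutside_of_mem (he : e ∈ X) : collapseOutside X z e = e :=
  X.piecewise_eq_of_mem _ _ he

theorem collapseOutside_of_notMem (he : e ∉ X) : collapseOutside X z e = z :=
  X.piecewise_eq_of_notMem _ _ he

theorem collapseOutside_eq_iff (hz : z ∉ X) (hd : d ∈ X) : collapseOutside X z e = d ↔ e = d := by
  by_cases he : e ∈ X
  · rw [collapseOutside_of_mem he]
  · rw [collapseOutside_of_notMem he]
    exact iff_of_false (fun h => hz (h ▸ hd)) fun h => he (h ▸ hd)

theorem collapseOutside_mem_iff (hXY : X ⊆ Y) (hz : z ∉ Y) : collapseOutside X z e ∈ Y ↔ e ∈ X := by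
  by_cases he : e ∈ X
  · rw [collapseOutside_of_mem he]
    exact iff_of_true (hXY he) he
  · rw [collapseOutside_of_notMem he]
    exact iff_of_false hz he

theorem IsSync.mem_dataSet [Infinite D] {v : List (A × D)} (hv : IsSync D T v)
    {p : Config L R D} (hp : p ∈ postWord T Set.univ v) (r : R) : p.2 r ∈ dataSet v := by
  by_contra hr
  obtain ⟨z, hz⟩ := ((finite_dataSet v).insert (p.2 r)).exists_notMem
  rw [Set.mem_insert_iff, not_or] at hz
  have hrename : Config.rename (collapseOutside (dataSet v) z) p ∈ postWord T Set.univ v :=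
    postWord_mono (Set.subset_univ _) v
      (rename_mem_postWord (fun _ hd _ => collapseOutside_eq_iff hz.2 hd) hp)
  obtain ⟨-, qs, hqs⟩ := hv
  rw [hqs, Set.mem_singleton_iff] at hp hrename
  have hpr : collapseOutside (dataSet v) z (p.2 r) = p.2 r :=
    congrArg (fun q : Config L R D => q.2 r) (hrename.trans hp.symm)
  exact hz.1 ((collapseOutside_of_notMem hr).symm.trans hpr)

end Rename

section Correspondence

variable {T : Set (RATrans L A R)} {X Y : Set D} {q q' : Config L R D}

/-- `q` and `q'` share their location, and replacing the content of each register of `q` by its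
content in `q'` gives a bijection from the data of `Y` stored in `q` to the data of `X` stored in
`q'`. It is used to replay a word over `Y` by a word over `X`. -/
structure Corresponds (Y X : Set D) (q q' : Config L R D) : Prop where
  loc_eq : q.1 = q'.1
  mem_iff : ∀ r, q.2 r ∈ Y ↔ q'.2 r ∈ X
  eq_iff : ∀ r s, q.2 r ∈ Y → q.2 s ∈ Y → (q.2 r = q.2 s ↔ q'.2 r = q'.2 s)

theorem Corresponds.symm (h : Corresponds Y X q q') : Corresponds X Y q' q where
  loc_eq := h.loc_eq.symm
  mem_iff r := (h.mem_iff r).symm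
  eq_iff r s hr hs := (h.eq_iff r s ((h.mem_iff r).2 hr) ((h.mem_iff s).2 hs)).symm

theorem corresponds_rename_collapse {z : D} (hXY : X ⊆ Y) (hz : z ∉ Y) (q : Config L R D) :
    Corresponds Y X (Config.rename (collapseOutside X z) q) q where
  loc_eq := rfl
  mem_iff _ := collapseOutside_mem_iff hXY hz
  eq_iff r s hr hs := by
    have hmem (t) (ht : (Config.rename (collapseOutside X z) q).2 t ∈ Y) : q.2 t ∈ X :=
      (collapseOutside_mem_iff hXY hz).1 ht
    simp only [Config.rename, Function.comp_apply, collapseOutside_of_mem (hmem r hr),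
      collapseOutside_of_mem (hmem s hs)]

theorem Corresponds.exists_datum [Finite R] (h : Corresponds Y X q q') {d : D} (hd : d ∈ Y)
    (hX : (q'.2 ⁻¹' X).ncard < X.ncard) : ∃ d' ∈ X, ∀ r, q.2 r = d ↔ q'.2 r = d' := by
  by_cases hstored : ∃ r, q.2 r = d
  · obtain ⟨r, rfl⟩ := hstored
    refine ⟨q'.2 r, (h.mem_iff r).1 hd, fun s => ⟨fun hs => ?_, fun hs => ?_⟩⟩
    · exact (h.eq_iff s r (hs ▸ hd) hd).1 hs
    · exact (h.eq_iff s r ((h.mem_iff s).2 (hs ▸ (h.mem_iff r).1 hd)) hd).2 hs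
  · have hunstored : ¬ X ⊆ q'.2 '' (q'.2 ⁻¹' X) := fun hsub =>
      hX.not_ge ((Set.ncard_le_ncard hsub).trans Set.ncard_image_le)
    obtain ⟨d', hd', hnew⟩ := Set.not_subset.1 hunstored
    refine ⟨d', hd', fun r => iff_of_false (fun hr => hstored ⟨r, hr⟩) fun hr => ?_⟩
    exact hnew ⟨r, Set.mem_preimage.2 (hr ▸ hd'), hr⟩

theorem Corresponds.exists_step (h : Corresponds Y X q q') {a : A} {d d' : D} (hd : d ∈ Y)
    (hd' : d' ∈ X) (hdd' : ∀ r, q.2 r = d ↔ q'.2 r = d') {p : Config L R D}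
    (hp : Step T q (a, d) p) : ∃ p', Step T q' (a, d') p' ∧ Corresponds Y X p p' := by
  obtain ⟨φ, up, ℓ, hT, hsat, rfl⟩ := hp
  refine ⟨_, ⟨φ, up, ℓ, h.loc_eq ▸ hT, (RC.sat_congr hdd' φ).1 hsat, rfl⟩, rfl, ?_, ?_⟩
  · intro r
    by_cases hr : r ∈ up
    · simp [updVal, hr, hd, hd']
    · simpa [updVal, hr] using h.mem_iff r
  · intro r s
    by_cases hr : r ∈ up <;> by_cases hs : s ∈ up
    · simp [updVal, hr, hs]
    · simpa [updVal, hr, hs, eq_comm (a := d), eq_comm (a := d')] using fun _ _ => hdd' s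
    · simp [updVal, hr, hs, hdd' r]
    · simpa [updVal, hr, hs] using h.eq_iff r s

theorem Corresponds.exists_word [Finite R] (hdet : RADet D T) {i : ℕ} (hiR : i ≤ Nat.card R)
    (hiX : i ≤ X.ncard) (h : Corresponds Y X q q') {w : List (A × D)} (hw : dataSet w ⊆ Y)
    (hend : ∀ p ∈ postWord T {q} w, ∀ r, p.2 r ∈ Y) :
    ∃ u : List (A × D), dataSet u ⊆ X ∧
      ∀ p ∈ postWord T {q'} u, i ≤ (p.2 ⁻¹' X).ncard := by
  induction w generalizing q q' with
  | nil =>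
    have huniv : q'.2 ⁻¹' X = Set.univ :=
      Set.eq_univ_of_forall fun r => (h.mem_iff r).1 (hend q rfl r)
    exact ⟨[], by simp, by simpa [postWord, huniv] using hiR⟩
  | cons e w ih =>
    obtain ⟨a, d⟩ := e
    rw [dataSet_cons, Set.insert_subset_iff] at hw
    by_cases hi : i ≤ (q'.2 ⁻¹' X).ncard
    · exact ⟨[], by simp, by simpa [postWord] using hi⟩
    obtain ⟨d', hd', hdd'⟩ := h.exists_datum hw.1 ((not_le.1 hi).trans_le hiX)
    by_cases hstep : ∃ p, Step T q (a, d) p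
    · obtain ⟨p, hp⟩ := hstep
      obtain ⟨p', hp', hpp'⟩ := h.exists_step hw.1 hd' hdd' hp
      simp only [postWord, hdet.postStep_singleton hp] at hend
      obtain ⟨u, huX, hu⟩ := ih hpp' hw.2 hend
      refine ⟨(a, d') :: u, by simp [Set.insert_subset_iff, hd', huX], ?_⟩
      simpa only [postWord, hdet.postStep_singleton hp'] using hu
    · refine ⟨[(a, d')], by simp [hd'], ?_⟩
      rintro p' ⟨_, rfl, hp'⟩
      obtain ⟨p, hp, -⟩ := h.symm.exists_step hd' hw.1 (fun r => (hdd' r).symm) hp'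
      exact absurd ⟨p, hp⟩ hstep

end Correspondence

section Synchronizing

variable [Finite R] [Infinite D] {T : Set (RATrans L A R)} {v : List (A × D)} {X : Set D} {i : ℕ}

theorem IsSync.exists_word_singleton (hdet : RADet D T) (hv : IsSync D T v) (hX : X.Finite)
    (hiR : i ≤ Nat.card R) (hiX : i ≤ X.ncard) (q : Config L R D) :
    ∃ u : List (A × D), dataSet u ⊆ X ∧ ∀ p ∈ postWord T {q} u, i ≤ (p.2 ⁻¹' X).ncard := by
  obtain ⟨z, hz⟩ := (hX.union (finite_dataSet v)).exists_notMem
  refine (corresponds_rename_collapse Set.subset_union_left hz q).exists_word hdet hiR hiX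
    (w := v) Set.subset_union_right fun p hp r => Or.inr ?_
  exact hv.mem_dataSet (postWord_mono (Set.subset_univ _) v hp) r

theorem IsSync.exists_word_of_finite (hdet : RADet D T) (hv : IsSync D T v) (hX : X.Finite)
    (hiR : i ≤ Nat.card R) (hiX : i ≤ X.ncard) {F : Set (Config L R D)} (hF : F.Finite) :
    ∃ u : List (A × D), dataSet u ⊆ X ∧ ∀ p ∈ postWord T F u, i ≤ (p.2 ⁻¹' X).ncard := by
  induction F, hF using Set.Finite.induction_on with
  | empty => exact ⟨[], by simp, by simp [postWord]⟩
  | @insert q F _ _ ih =>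
    obtain ⟨u, huX, hu⟩ := ih
    obtain ⟨u', huX', hu'⟩ : ∃ u' : List (A × D), dataSet u' ⊆ X ∧
        ∀ p ∈ postWord T (postWord T {q} u) u', i ≤ (p.2 ⁻¹' X).ncard := by
      rcases (hdet.subsingleton_postWord Set.subsingleton_singleton u).eq_empty_or_singleton
        with hempty | ⟨q', hq'⟩
      · exact ⟨[], by simp, hempty ▸ by simp⟩
      · exact hq' ▸ hv.exists_word_singleton hdet hX hiR hiX q'
    refine ⟨u ++ u', by simp [huX, huX'], fun p hp => ?_⟩
    rw [Set.insert_eq, postWord_append, postWord_union, postWord_union] at hp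
    exact hp.elim (hu' p) (le_ncard_preimage_of_mem_postWord huX' hu p)

theorem stmt1_general (hdet : RADet D T) (hv : IsSync D T v) (hX : X.Finite)
    (hiR : i ≤ Nat.card R) (hiX : i ≤ X.ncard) (ℓ : L) :
    ∃ u : List (A × D), dataSet u ⊆ X ∧
      ∀ q ∈ postWord T {p : Config L R D | p.1 = ℓ} u, i ≤ {r : R | q.2 r ∈ X}.ncard := by
  obtain ⟨z, hz⟩ := hX.exists_notMem
  let F : Set (Config L R D) := {ℓ} ×ˢ Set.univ.pi fun _ => insert z X
  have hF : F.Finite := (Set.finite_singleton ℓ).prod (Set.Finite.pi fun _ => hX.insert z)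
  have hcollapse : Config.rename (collapseOutside X z) '' {p : Config L R D | p.1 = ℓ} ⊆ F := by
    rintro _ ⟨p, hp, rfl⟩
    refine ⟨hp, fun r _ => ?_⟩
    by_cases hr : p.2 r ∈ X
    · exact Or.inr ((collapseOutside_mem_iff subset_rfl hz).2 hr)
    · exact Or.inl (collapseOutside_of_notMem hr)
  obtain ⟨u, huX, hu⟩ := hv.exists_word_of_finite hdet hX hiR hiX hF
  refine ⟨u, huX, fun q hq => ?_⟩
  have hpreimage : (Config.rename (collapseOutside X z) q).2 ⁻¹' X = q.2 ⁻¹' X :=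
    Set.ext fun _ => collapseOutside_mem_iff subset_rfl hz
  have hmem : Config.rename (collapseOutside X z) q ∈ postWord T F u :=
    postWord_mono hcollapse u
      (rename_mem_postWord (fun _ hd _ => collapseOutside_eq_iff hz (huX hd)) hq)
  exact (hu _ hmem).trans_eq (congrArg Set.ncard hpreimage)

end Synchronizing

end RegisterAutomata

/-- if `v` is a synchronizing data word of a complete `k`-DRA with at
least `k` distinct data, and `x 0, …, x (k-1)` are the first `k` pairwise distinct data
values of `v` in order of first occurrence, then for every location `ℓ` and every
`1 ≤ i ≤ k` there is a data word `u` over `{x 0, …, x (i-1)}` such that every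
configuration reached from `{ℓ} × D^k` via `u` has at least `i` registers holding a
value among `x 0, …, x (i-1)`. -/
theorem stmt1 {L A R D : Type} [Fintype L] [Fintype A] [Fintype R] [Infinite D]
    (T : Set (RATrans L A R)) (k : ℕ) (hk : Fintype.card R = k)
    (hcomp : RAComplete D T) (hdet : RADet D T)
    (v : List (A × D)) (hv : IsSync D T v)
    (hdata : k ≤ (dataSet v).ncard)
    (x : Fin k → D)
    (hx : ∀ i : Fin k, IsIthDatum (v.map Prod.snd) ((i : ℕ) + 1) (x i)) :
    ∀ ℓ : L, ∀ i : ℕ, 1 ≤ i → i ≤ k →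
      ∃ u : List (A × D),
        dataSet u ⊆ {d : D | ∃ j : Fin k, (j : ℕ) < i ∧ x j = d} ∧
        ∀ q ∈ postWord T {p : Config L R D | p.1 = ℓ} u,
          i ≤ {r : R | ∃ j : Fin k, (j : ℕ) < i ∧ q.2 r = x j}.ncard := by
  intro ℓ i _ hik
  simpa only [Set.image, Set.mem_ofPred_eq, eq_comm (a := x _)] using
    stmt1_general hdet hv (Set.toFinite (x '' {j | (j : ℕ) < i})) (by simpa [hk] using hik)
      (ncard_image_setOf_val_lt hik (injective_of_isIthDatum hx)).ge ℓ
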